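/- Let X be a simplicial complex on a finite vertex set V with |V| = n. Then for all 0 ≤ q ≤ n−1 there is an isomorphism h̃_{n−2−q}(X;F) ≅ h̃^{q−1}(X^∨;F), where X^∨ = {A ⊆ V : V \ A ∉ X} is the Alexander dual of X. -/

import Mathlib

open Finset

/-- An abstract simplicial complex on the vertex type `V`: a set of finite subsets
("simplices") closed under taking subsets. -/
def IsComplex {V : Type*} (X : Set (Finset V)) : Prop :=
  ∀ σ ∈ X, ∀ τ, τ ⊆ σ → τ ∈ X

variable {V : Type*}

/-- The induced subcomplex `X[S] = {σ ∈ X : σ ⊆ S}`. -/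
def induce (X : Set (Finset V)) (S : Finset V) : Set (Finset V) :=
  {σ | σ ∈ X ∧ σ ⊆ S}

/-- The link `lk(X,τ) = {σ : σ ∪ τ ∈ X, σ ∩ τ = ∅}`; it is the void complex if `τ ∉ X`. -/
def link [DecidableEq V] (X : Set (Finset V)) (τ : Finset V) : Set (Finset V) :=
  {σ | σ ∪ τ ∈ X ∧ Disjoint σ τ}

/-- The star `str(X,τ) = {σ ∈ X : σ ∪ τ ∈ X}`. -/
def star [DecidableEq V] (X : Set (Finset V)) (τ : Finset V) : Set (Finset V) :=
  {σ | σ ∈ X ∧ σ ∪ τ ∈ X}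

/-- The Alexander dual `X^∨ = {A ⊆ V : V \ A ∉ X}` of a complex on the finite vertex set
`V`. -/
def alexDual [Fintype V] [DecidableEq V] (X : Set (Finset V)) : Set (Finset V) :=
  {A | Aᶜ ∉ X}

section Homology

variable (F : Type) [Field F]

/-- The faces of `X` of cardinality `n` (i.e. of dimension `n-1`). -/
def Face (X : Set (Finset V)) (n : ℕ) : Type _ :=
  {σ : Finset V // σ ∈ X ∧ σ.card = n}

/-- Simplicial chains in dimension `n-1`: formal `F`-linear combinations of faces of
cardinality `n`.  Since the empty face spans the degree `n = 0` part, this yields the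
*augmented* simplicial chain complex of `X`. -/
def SChain (X : Set (Finset V)) (n : ℕ) : Type _ := Face X n →₀ F

noncomputable instance (X : Set (Finset V)) (n : ℕ) : AddCommGroup (SChain F X n) :=
  Finsupp.instAddCommGroup

noncomputable instance (X : Set (Finset V)) (n : ℕ) : Module F (SChain F X n) :=
  Finsupp.module (Face X n) F

variable [LinearOrder V]

open Classical in
/-- The boundary of a face of cardinality `n+1`: the alternating sum of its codimension-one
subfaces, with signs determined by the linear order on the vertices. -/
noncomputable def bdryElem (X : Set (Finset V)) (n : ℕ) (σ : Face X (n+1)) :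
    SChain F X n :=
  ∑ x ∈ σ.1.attach,
    if h : σ.1.erase ↑x ∈ X then
      ((-1 : F) ^ ((σ.1.filter (fun y => y < (x : V))).card)) •
        (Finsupp.single (⟨σ.1.erase ↑x, h, by
          rw [Finset.card_erase_of_mem x.2, σ.2.2]; rfl⟩ : Face X n) 1 : SChain F X n)
    else 0

/-- The simplicial boundary map (in degree `0` it is the augmentation `C_0 → C_{-1} ≅ F`
encoded by `scyc`). -/
noncomputable def sbdry (X : Set (Finset V)) (n : ℕ) :
    SChain F X (n+1) →ₗ[F] SChain F X n :=
  Finsupp.lsum F fun σ => LinearMap.toSpanSingleton F (SChain F X n) (bdryElem F X n σ)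

/-- The cycles of the augmented simplicial chain complex. -/
noncomputable def scyc (X : Set (Finset V)) : (n : ℕ) → Submodule F (SChain F X n)
  | 0 => ⊤
  | (n+1) => LinearMap.ker (sbdry F X n)

/-- `RH F X n` is the reduced simplicial homology `h̃_{n-1}(X; F)` of `X` with coefficients
in `F` (faces of cardinality `n` have dimension `n-1`). -/
abbrev RH (X : Set (Finset V)) (n : ℕ) : Type _ :=
  scyc F X n ⧸ Submodule.comap (scyc F X n).subtype (LinearMap.range (sbdry F X n))

/-- `X` is `d`-Leray over `F`: every induced subcomplex has vanishing reduced homology in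
all dimensions `i ≥ d`. -/
def IsLeray (d : ℕ) (X : Set (Finset V)) : Prop :=
  ∀ S : Finset V, ∀ i : ℕ, d ≤ i → Subsingleton (RH F (induce X S) (i+1))

end Homology


section Cohomology

variable (F : Type) [Field F] [LinearOrder V]

/-- Simplicial cochains: the linear dual of the (augmented) simplicial chain group. -/
def SCochain (X : Set (Finset V)) (n : ℕ) : Type _ :=
  Module.Dual F (SChain F X n)

noncomputable instance (X : Set (Finset V)) (n : ℕ) : AddCommGroup (SCochain F X n) :=
  inferInstanceAs (AddCommGroup (Module.Dual F (SChain F X n)))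

noncomputable instance (X : Set (Finset V)) (n : ℕ) : Module F (SCochain F X n) :=
  inferInstanceAs (Module F (Module.Dual F (SChain F X n)))

/-- The simplicial coboundary map: the dual of the boundary map. -/
noncomputable def scobdry (X : Set (Finset V)) (n : ℕ) :
    SCochain F X n →ₗ[F] SCochain F X (n+1) :=
  (sbdry F X n).dualMap

/-- The coboundaries of the augmented simplicial cochain complex. -/
noncomputable def scobound (X : Set (Finset V)) : (n : ℕ) → Submodule F (SCochain F X n)
  | 0 => ⊥
  | (n+1) => LinearMap.range (scobdry F X n)

/-- `RCoh F X n` is the reduced simplicial cohomology `h̃^{n-1}(X; F)` of `X` with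
coefficients in `F` (cochains on faces of cardinality `n` have dimension `n-1`). -/
abbrev RCoh (X : Set (Finset V)) (n : ℕ) : Type _ :=
  LinearMap.ker (scobdry F X n) ⧸
    Submodule.comap (LinearMap.ker (scobdry F X n)).subtype (scobound F X n)

end Cohomology

/-!
The full simplex `Δ` on `V` is acyclic, because the cone over a vertex contracts it. Hence the
boundary identifies the homology of `X` with the relative homology of `(Δ, X)` one degree higher.
Relative chains live on the faces not in `X`, which are the complements of the faces of `X^∨`.
Up to a sign, complementation turns the boundary of such chains into the coboundary of cochains
on `X^∨`.
-/

namespace AlexanderDuality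

section Sign

variable [LinearOrder V] (R : Type*) [CommRing R]

/-- The incidence sign of the vertex `x` relative to the face `A`, determined by the number of
vertices of `A` preceding `x`. It is defined also for `x ∉ A`. -/
def incidenceSign (x : V) (A : Finset V) : R :=
  (-1) ^ #{y ∈ A | y < x}

theorem incidenceSign_mul_self (x : V) (A : Finset V) :
    incidenceSign R x A * incidenceSign R x A = 1 := by
  rw [incidenceSign, ← mul_pow, neg_one_mul, neg_neg, one_pow]

theorem incidenceSign_insert_of_lt {x y : V} {A : Finset V} (hyx : y < x) (hy : y ∉ A) :
    incidenceSign R x (insert y A) = -incidenceSign R x A := by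
  have hy' : y ∉ ({z ∈ A | z < x} : Finset V) := fun h => hy (mem_of_mem_filter y h)
  rw [incidenceSign, filter_insert, if_pos hyx, card_insert_of_notMem hy', pow_succ, mul_neg_one,
    incidenceSign]

theorem incidenceSign_insert_of_le {x y : V} (A : Finset V) (hxy : x ≤ y) :
    incidenceSign R x (insert y A) = incidenceSign R x A := by
  rw [incidenceSign, filter_insert, if_neg hxy.not_gt, incidenceSign]

theorem incidenceSign_erase_of_le {x y : V} (A : Finset V) (hxy : x ≤ y) :
    incidenceSign R x (A.erase y) = incidenceSign R x A := by
  rw [← incidenceSign_insert_of_le R (A.erase y) hxy]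
  by_cases hy : y ∈ A
  · rw [insert_erase hy]
  · rw [erase_eq_of_notMem hy, incidenceSign_insert_of_le R A hxy]

theorem incidenceSign_mul_incidenceSign_insert {x v : V} {A : Finset V} (hx : x ∈ A)
    (hv : v ∉ A) :
    incidenceSign R v A * incidenceSign R x (insert v A) =
      -(incidenceSign R x A * incidenceSign R v (A.erase x)) := by
  rcases lt_or_gt_of_ne (ne_of_mem_of_not_mem hx hv) with hxv | hvx
  · have hA : incidenceSign R v A = -incidenceSign R v (A.erase x) := by
      rw [← incidenceSign_insert_of_lt R hxv (notMem_erase x A), insert_erase hx]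
    rw [hA, incidenceSign_insert_of_le R A hxv.le]
    ring
  · rw [incidenceSign_insert_of_lt R hvx hv, incidenceSign_erase_of_le R A hvx.le]
    ring

end Sign

section Boundary

variable [LinearOrder V] (R : Type*) [CommRing R]

/-- The boundary operator of the full simplex on `V`, on chains of all degrees at once, the empty
face included. -/
noncomputable def boundary : (Finset V →₀ R) →ₗ[R] (Finset V →₀ R) :=
  Finsupp.linearCombination R fun A =>
    ∑ x ∈ A, incidenceSign R x A • Finsupp.single (A.erase x) 1

/-- The cone operator with apex `v`, with the sign for which it is a contracting homotopy of
`boundary`. -/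
noncomputable def cone (v : V) : (Finset V →₀ R) →ₗ[R] (Finset V →₀ R) :=
  Finsupp.linearCombination R fun A =>
    if v ∈ A then 0 else incidenceSign R v A • Finsupp.single (insert v A) 1

theorem boundary_single (A : Finset V) :
    boundary R (Finsupp.single A 1) =
      ∑ x ∈ A, incidenceSign R x A • Finsupp.single (A.erase x) 1 := by
  rw [boundary, Finsupp.linearCombination_single, one_smul]

theorem cone_single_of_mem {v : V} {A : Finset V} (hv : v ∈ A) :
    cone R v (Finsupp.single A 1) = 0 := by
  rw [cone, Finsupp.linearCombination_single, one_smul, if_pos hv]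

theorem cone_single_of_notMem {v : V} {A : Finset V} (hv : v ∉ A) :
    cone R v (Finsupp.single A 1) = incidenceSign R v A • Finsupp.single (insert v A) 1 := by
  rw [cone, Finsupp.linearCombination_single, one_smul, if_neg hv]

theorem cone_boundary_single_of_mem {v : V} {A : Finset V} (hv : v ∈ A) :
    cone R v (boundary R (Finsupp.single A 1)) = Finsupp.single A 1 := by
  rw [boundary_single, map_sum, sum_eq_single_of_mem v hv]
  · rw [map_smul, cone_single_of_notMem R (notMem_erase v A), insert_erase hv, smul_smul,
      incidenceSign_erase_of_le R A le_rfl, incidenceSign_mul_self, one_smul]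
  · intro x _ hxv
    rw [map_smul, cone_single_of_mem R (mem_erase.2 ⟨hxv.symm, hv⟩), smul_zero]

theorem boundary_cone_single_of_notMem {v : V} {A : Finset V} (hv : v ∉ A) :
    boundary R (cone R v (Finsupp.single A 1)) =
      Finsupp.single A 1 - cone R v (boundary R (Finsupp.single A 1)) := by
  have hleading : incidenceSign R v A • incidenceSign R v (insert v A) •
      Finsupp.single ((insert v A).erase v) (1 : R) = Finsupp.single A 1 := by
    rw [erase_insert hv, smul_smul, incidenceSign_insert_of_le R A le_rfl,
      incidenceSign_mul_self, one_smul]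
  rw [cone_single_of_notMem R hv, map_smul, boundary_single, boundary_single, sum_insert hv,
    smul_add, hleading, sub_eq_add_neg, map_sum, smul_sum, ← sum_neg_distrib]
  refine congrArg _ (sum_congr rfl fun x hx => ?_)
  rw [map_smul, cone_single_of_notMem R fun h => hv (mem_of_mem_erase h), smul_smul, smul_smul,
    incidenceSign_mul_incidenceSign_insert R hx hv, neg_smul,
    erase_insert_of_ne (ne_of_mem_of_not_mem hx hv).symm]

theorem boundary_cone_add_cone_boundary (v : V) (f : Finset V →₀ R) :
    boundary R (cone R v f) + cone R v (boundary R f) = f := by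
  have hbasis : boundary R ∘ₗ cone R v + cone R v ∘ₗ boundary R = LinearMap.id := by
    refine Finsupp.lhom_ext' fun A => LinearMap.ext_ring ?_
    change boundary R (cone R v (Finsupp.single A 1)) +
      cone R v (boundary R (Finsupp.single A 1)) = Finsupp.single A 1
    by_cases hv : v ∈ A
    · rw [cone_single_of_mem R hv, map_zero, zero_add, cone_boundary_single_of_mem R hv]
    · rw [boundary_cone_single_of_notMem R hv, sub_add_cancel]
  exact LinearMap.congr_fun hbasis f

theorem boundary_cone (v : V) (f : Finset V →₀ R) :
    boundary R (cone R v f) = f - cone R v (boundary R f) :=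
  eq_sub_of_add_eq (boundary_cone_add_cone_boundary R v f)

-- The homotopy identity makes `boundary ∘ boundary` commute with every cone operator, and every
-- nonempty face is, up to sign, a cone over a smaller one.
theorem boundary_boundary (f : Finset V →₀ R) : boundary R (boundary R f) = 0 := by
  have hcone (v : V) (g : Finset V →₀ R) :
      boundary R (boundary R (cone R v g)) = cone R v (boundary R (boundary R g)) := by
    rw [boundary_cone, map_sub, boundary_cone, sub_sub_cancel]
  have hface (A : Finset V) : boundary R (boundary R (Finsupp.single A 1)) = 0 := by
    induction A using Finset.induction_on with
    | empty => rw [boundary_single, sum_empty, map_zero]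
    | insert v A hv ih =>
      have hA : Finsupp.single (insert v A) (1 : R) =
          incidenceSign R v A • cone R v (Finsupp.single A 1) := by
        rw [cone_single_of_notMem R hv, smul_smul, incidenceSign_mul_self, one_smul]
      rw [hA, map_smul, map_smul, hcone, ih, map_zero, smul_zero]
  have hzero : boundary R ∘ₗ boundary R = (0 : (Finset V →₀ R) →ₗ[R] (Finset V →₀ R)) :=
    Finsupp.lhom_ext' fun A => LinearMap.ext_ring (hface A)
  exact LinearMap.congr_fun hzero f

theorem boundary_apply [Fintype V] (f : Finset V →₀ R) (A : Finset V) :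
    boundary R f A = ∑ x ∈ Aᶜ, incidenceSign R x A * f (insert x A) := by
  induction f using Finsupp.induction_linear with
  | zero => simp
  | add f g hf hg =>
    simp only [map_add, Finsupp.add_apply, hf, hg, mul_add, sum_add_distrib]
  | single B c =>
    have hcofaces : {x ∈ B | B.erase x = A} = {x ∈ Aᶜ | B = insert x A} := by
      ext x
      simp only [mem_filter, mem_compl]
      constructor
      · rintro ⟨hx, rfl⟩
        exact ⟨notMem_erase x B, (insert_erase hx).symm⟩
      · rintro ⟨hx, rfl⟩
        exact ⟨mem_insert_self x A, erase_insert hx⟩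
    simp only [boundary, Finsupp.linearCombination_single, Finsupp.smul_apply,
      Finsupp.finsetSum_apply, smul_eq_mul, Finsupp.single_apply, mul_ite, mul_one, mul_zero,
      ← sum_filter, hcofaces, mul_sum]
    refine sum_congr rfl fun x hx => ?_
    rw [(mem_filter.1 hx).2, incidenceSign_insert_of_le R A le_rfl, mul_comm]

end Boundary

section Chains

variable (R : Type*) [CommRing R]

/-- The chains of the full simplex on `V` that are supported on the faces of `X` of cardinality
`k`. -/
noncomputable def chains (X : Set (Finset V)) (k : ℕ) : Submodule R (Finset V →₀ R) :=
  Finsupp.supported R R {A | A ∈ X ∧ #A = k}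

variable {R}

theorem mem_chains_iff {X : Set (Finset V)} {k : ℕ} {f : Finset V →₀ R} :
    f ∈ chains R X k ↔ ∀ A, ¬(A ∈ X ∧ #A = k) → f A = 0 :=
  Finsupp.mem_supported' R f

theorem single_mem_chains {X : Set (Finset V)} {k : ℕ} {A : Finset V} (hA : A ∈ X ∧ #A = k) :
    Finsupp.single A 1 ∈ chains R X k :=
  Finsupp.single_mem_supported R 1 hA

theorem map_mem_of_mem_chains {X : Set (Finset V)} {k : ℕ} {f : Finset V →₀ R}
    (hf : f ∈ chains R X k) {M : Type*} [AddCommGroup M] [Module R M]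
    {φ : (Finset V →₀ R) →ₗ[R] M} {N : Submodule R M}
    (h : ∀ A ∈ X, #A = k → φ (Finsupp.single A 1) ∈ N) : φ f ∈ N := by
  suffices chains R X k ≤ N.comap φ from this hf
  rw [chains, Finsupp.supported_eq_span_single, Submodule.span_le]
  rintro _ ⟨A, hA, rfl⟩
  exact h A hA.1 hA.2

theorem chains_mono {X Y : Set (Finset V)} (hXY : X ⊆ Y) (k : ℕ) :
    chains R X k ≤ chains R Y k :=
  Finsupp.supported_mono fun _ hA => ⟨hXY hA.1, hA.2⟩

theorem mem_chains_iff_of_mem_chains_univ {X : Set (Finset V)} {k : ℕ} {f : Finset V →₀ R}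
    (hf : f ∈ chains R Set.univ k) :
    f ∈ chains R X k ↔ ∀ A ∉ X, #A = k → f A = 0 := by
  rw [mem_chains_iff]
  refine ⟨fun h A hAX _ => h A fun hA => hAX hA.1, fun h A hA => ?_⟩
  by_cases hk : #A = k
  · exact h A (fun hAX => hA ⟨hAX, hk⟩) hk
  · exact mem_chains_iff.1 hf A fun hA' => hk hA'.2

theorem chains_eq_bot_of_card_lt [Fintype V] (X : Set (Finset V)) {k : ℕ}
    (hk : Fintype.card V < k) : chains R X k = ⊥ := by
  refine (Submodule.eq_bot_iff _).2 fun f hf => Finsupp.ext fun A => ?_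
  exact mem_chains_iff.1 hf A fun hA => (hA.2 ▸ card_le_univ A).not_gt hk

variable [LinearOrder V]

theorem boundary_mem_chains {X : Set (Finset V)} (hX : IsComplex X) {k : ℕ} {f : Finset V →₀ R}
    (hf : f ∈ chains R X (k + 1)) : boundary R f ∈ chains R X k := by
  refine map_mem_of_mem_chains hf fun A hA hk => ?_
  rw [boundary_single]
  refine Submodule.sum_mem _ fun x hx => Submodule.smul_mem _ _ (single_mem_chains ?_)
  exact ⟨hX A hA _ (erase_subset x A), by rw [card_erase_of_mem hx, hk, Nat.add_sub_cancel]⟩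

theorem boundary_mem_chains_univ {k : ℕ} {f : Finset V →₀ R}
    (hf : f ∈ chains R Set.univ (k + 1)) : boundary R f ∈ chains R Set.univ k :=
  boundary_mem_chains (fun _ _ _ _ => Set.mem_univ _) hf

theorem boundary_eq_zero_of_mem_chains_zero {X : Set (Finset V)} {f : Finset V →₀ R}
    (hf : f ∈ chains R X 0) : boundary R f = 0 := by
  rw [← Submodule.mem_bot R]
  refine map_mem_of_mem_chains hf fun A _ hA => ?_
  rw [card_eq_zero.1 hA, boundary_single, sum_empty, Submodule.mem_bot]

theorem cone_mem_chains_univ (v : V) {k : ℕ} {f : Finset V →₀ R}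
    (hf : f ∈ chains R Set.univ k) : cone R v f ∈ chains R Set.univ (k + 1) := by
  refine map_mem_of_mem_chains hf fun A _ hk => ?_
  by_cases hv : v ∈ A
  · rw [cone_single_of_mem R hv]
    exact Submodule.zero_mem _
  · rw [cone_single_of_notMem R hv]
    exact Submodule.smul_mem _ _
      (single_mem_chains ⟨Set.mem_univ _, by rw [card_insert_of_notMem hv, hk]⟩)

theorem exists_boundary_eq_of_boundary_eq_zero [Nonempty V] {k : ℕ} {f : Finset V →₀ R}
    (hf : f ∈ chains R Set.univ k) (hfz : boundary R f = 0) :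
    ∃ w ∈ chains R Set.univ (k + 1), boundary R w = f := by
  obtain ⟨v⟩ := ‹Nonempty V›
  exact ⟨cone R v f, cone_mem_chains_univ v hf, by rw [boundary_cone, hfz, map_zero, sub_zero]⟩

end Chains

section SimplicialChains

variable (F : Type) [Field F]

/-- The faces of `X` as a basis of its simplicial chains. -/
noncomputable def faceBasis (X : Set (Finset V)) (k : ℕ) :
    Module.Basis (Face X k) F (SChain F X k) :=
  (Finsupp.basisSingleOne : Module.Basis (Face X k) F (Face X k →₀ F))

/-- Simplicial chains of `X` as chains of the full simplex supported on `X`. -/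
noncomputable def chainEquiv (X : Set (Finset V)) (k : ℕ) : SChain F X k ≃ₗ[F] chains F X k :=
  (Finsupp.supportedEquivFinsupp {A | A ∈ X ∧ #A = k}).symm

theorem faceBasis_apply {X : Set (Finset V)} {k : ℕ} (σ : Face X k) :
    faceBasis F X k σ = (Finsupp.single σ 1 : Face X k →₀ F) :=
  congrFun Finsupp.coe_basisSingleOne σ

theorem chainEquiv_faceBasis {X : Set (Finset V)} {k : ℕ} (σ : Face X k) :
    (chainEquiv F X k (faceBasis F X k σ) : Finset V →₀ F) = Finsupp.single σ.1 1 := by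
  rw [faceBasis_apply]
  exact Finsupp.supportedEquivFinsupp_symm_single {A | A ∈ X ∧ #A = k} σ (1 : F)

variable [LinearOrder V] {F} {X : Set (Finset V)}

theorem sbdry_faceBasis {k : ℕ} (σ : Face X (k + 1)) :
    sbdry F X k (faceBasis F X (k + 1) σ) = bdryElem F X k σ := by
  rw [faceBasis_apply]
  exact (Finsupp.lsum_single ..).trans (one_smul F _)

theorem chainEquiv_bdryElem (hX : IsComplex X) {k : ℕ} (σ : Face X (k + 1)) :
    (chainEquiv F X k (bdryElem F X k σ) : Finset V →₀ F) =
      boundary F (Finsupp.single σ.1 1) := by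
  let facet (x : {x // x ∈ σ.1}) : Face X k :=
    ⟨σ.1.erase x.1, hX _ σ.2.1 _ (erase_subset _ _), by
      rw [card_erase_of_mem x.2, σ.2.2, Nat.add_sub_cancel]⟩
  have hfacets : bdryElem F X k σ =
      ∑ x ∈ σ.1.attach, incidenceSign F x.1 σ.1 • faceBasis F X k (facet x) :=
    sum_congr rfl fun x _ => (dif_pos (facet x).2.1).trans
      (congrArg (incidenceSign F x.1 σ.1 • ·) (faceBasis_apply F (facet x)).symm)
  rw [hfacets, map_sum, AddSubmonoidClass.coe_finsetSum, boundary_single, ← sum_attach σ.1]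
  refine sum_congr rfl fun x _ => ?_
  rw [map_smul, Submodule.coe_smul, chainEquiv_faceBasis]

theorem chainEquiv_sbdry (hX : IsComplex X) {k : ℕ} (c : SChain F X (k + 1)) :
    (chainEquiv F X k (sbdry F X k c) : Finset V →₀ F) =
      boundary F (chainEquiv F X (k + 1) c) := by
  have hbasis : (chains F X k).subtype ∘ₗ (chainEquiv F X k).toLinearMap ∘ₗ sbdry F X k =
      boundary F ∘ₗ (chains F X (k + 1)).subtype ∘ₗ (chainEquiv F X (k + 1)).toLinearMap := by
    refine (faceBasis F X (k + 1)).ext fun σ => ?_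
    simp only [LinearMap.comp_apply, Submodule.subtype_apply, LinearEquiv.coe_coe,
      sbdry_faceBasis, chainEquiv_bdryElem hX, chainEquiv_faceBasis]
  exact LinearMap.congr_fun hbasis c

theorem mem_scyc_iff (hX : IsComplex X) {k : ℕ} {c : SChain F X k} :
    c ∈ scyc F X k ↔ boundary F (chainEquiv F X k c : Finset V →₀ F) = 0 := by
  cases k with
  | zero =>
    exact iff_of_true trivial (boundary_eq_zero_of_mem_chains_zero (chainEquiv F X 0 c).2)
  | succ k =>
    rw [← chainEquiv_sbdry hX, ZeroMemClass.coe_eq_zero, LinearEquiv.map_eq_zero_iff]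
    exact LinearMap.mem_ker

theorem mem_range_sbdry_iff (hX : IsComplex X) {k : ℕ} {c : SChain F X k} :
    c ∈ LinearMap.range (sbdry F X k) ↔
      ∃ s ∈ chains F X (k + 1), boundary F s = chainEquiv F X k c := by
  constructor
  · rintro ⟨d, rfl⟩
    exact ⟨chainEquiv F X (k + 1) d, (chainEquiv F X (k + 1) d).2, (chainEquiv_sbdry hX d).symm⟩
  · rintro ⟨s, hs, hsc⟩
    refine ⟨(chainEquiv F X (k + 1)).symm ⟨s, hs⟩, (chainEquiv F X k).injective (Subtype.ext ?_)⟩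
    rw [chainEquiv_sbdry hX, LinearEquiv.apply_symm_apply, hsc]

end SimplicialChains

section Complementation

variable [Fintype V] [LinearOrder V] (R : Type*) [CommRing R]

/-- The sign with which a face corresponds to the dual basis element of its complement; it turns
the boundary into the coboundary. -/
def complSign (A : Finset V) : R :=
  ∏ x ∈ A, incidenceSign R x univ

theorem complSign_mul_self (A : Finset V) : complSign R A * complSign R A = 1 := by
  rw [complSign, ← prod_mul_distrib]
  exact prod_eq_one fun x _ => incidenceSign_mul_self R x univ

theorem incidenceSign_mul_incidenceSign_compl (x : V) (A : Finset V) :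
    incidenceSign R x A * incidenceSign R x Aᶜ = incidenceSign R x univ := by
  rw [incidenceSign, incidenceSign, incidenceSign, ← pow_add,
    ← card_union_of_disjoint (disjoint_filter_filter disjoint_compl_right), ← filter_union,
    union_compl]

theorem complSign_mul_incidenceSign {x : V} {A : Finset V} (hx : x ∉ A) :
    complSign R A * incidenceSign R x A = incidenceSign R x Aᶜ * complSign R (insert x A) := by
  rw [complSign, complSign, prod_insert hx, ← incidenceSign_mul_incidenceSign_compl R x A]
  linear_combination (-incidenceSign R x A * ∏ a ∈ A, incidenceSign R a univ) *
    incidenceSign_mul_self R x Aᶜ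

/-- The map from chains to functionals on chains sending a face to `± 1` times the dual basis
element of its complement. -/
noncomputable def complDual : (Finset V →₀ R) →ₗ[R] Module.Dual R (Finset V →₀ R) :=
  Finsupp.linearCombination R fun A => complSign R A • Finsupp.lapply Aᶜ

theorem complDual_apply_single (f : Finset V →₀ R) (B : Finset V) :
    complDual R f (Finsupp.single B 1) = complSign R Bᶜ * f Bᶜ := by
  induction f using Finsupp.induction_linear with
  | zero => simp
  | add f g hf hg => simp only [map_add, LinearMap.add_apply, Finsupp.add_apply, hf, hg, mul_add]
  | single A c =>
    rw [complDual, Finsupp.linearCombination_single]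
    by_cases hAB : A = Bᶜ
    · simp [hAB, mul_comm]
    · have hBA : B ≠ Aᶜ := fun h => hAB (by rw [h, compl_compl])
      simp [Ne.symm hAB, hBA.symm]

theorem complDual_boundary (f g : Finset V →₀ R) :
    complDual R (boundary R f) g = complDual R f (boundary R g) := by
  have hbasis : complDual R (boundary R f) = complDual R f ∘ₗ boundary R := by
    refine Finsupp.lhom_ext' fun B => LinearMap.ext_ring ?_
    change complDual R (boundary R f) (Finsupp.single B 1) =
      complDual R f (boundary R (Finsupp.single B 1))
    rw [complDual_apply_single, boundary_apply, boundary_single, map_sum, compl_compl, mul_sum]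
    refine sum_congr rfl fun x hx => ?_
    rw [map_smul, complDual_apply_single, compl_erase, smul_eq_mul, ← mul_assoc, ← mul_assoc,
      complSign_mul_incidenceSign R (notMem_compl.2 hx), compl_compl]
  exact LinearMap.congr_fun hbasis g

end Complementation

section SimplicialCochains

variable {F : Type} [Field F]

instance (Y : Set (Finset V)) (q : ℕ) : FunLike (SCochain F Y q) (SChain F Y q) F :=
  inferInstanceAs (FunLike (Module.Dual F (SChain F Y q)) (SChain F Y q) F)

theorem scochain_ext {Y : Set (Finset V)} {q : ℕ} {g g' : SCochain F Y q}
    (h : ∀ σ, g (faceBasis F Y q σ) = g' (faceBasis F Y q σ)) : g = g' :=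
  (faceBasis F Y q).ext h

variable [LinearOrder V]

theorem scobdry_apply {Y : Set (Finset V)} {q : ℕ} (g : SCochain F Y q)
    (c : SChain F Y (q + 1)) : scobdry F Y q g c = g (sbdry F Y q c) :=
  rfl

variable [Fintype V]

variable (F) in
/-- The cochain on `Y` whose value on a face is, up to sign, the coefficient of the given chain
at the complementary face. -/
noncomputable def complCochain (Y : Set (Finset V)) (q : ℕ) :
    (Finset V →₀ F) →ₗ[F] SCochain F Y q :=
  ((chains F Y q).subtype ∘ₗ (chainEquiv F Y q).toLinearMap).dualMap ∘ₗ complDual F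

theorem complCochain_apply {Y : Set (Finset V)} {q : ℕ} (f : Finset V →₀ F)
    (c : SChain F Y q) : complCochain F Y q f c = complDual F f (chainEquiv F Y q c) :=
  rfl

theorem complCochain_faceBasis {Y : Set (Finset V)} {q : ℕ} (f : Finset V →₀ F) (σ : Face Y q) :
    complCochain F Y q f (faceBasis F Y q σ) = complSign F σ.1ᶜ * f σ.1ᶜ := by
  rw [complCochain_apply, chainEquiv_faceBasis, complDual_apply_single]

theorem scobdry_complCochain {Y : Set (Finset V)} (hY : IsComplex Y) (q : ℕ)
    (f : Finset V →₀ F) :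
    scobdry F Y q (complCochain F Y q f) = complCochain F Y (q + 1) (boundary F f) := by
  refine DFunLike.ext _ _ fun c => ?_
  rw [scobdry_apply, complCochain_apply, complCochain_apply, chainEquiv_sbdry hY,
    complDual_boundary]

theorem exists_complCochain_eq {Y : Set (Finset V)} {m q : ℕ} (hmq : m + q = Fintype.card V)
    (g : SCochain F Y q) : ∃ f ∈ chains F Set.univ m, complCochain F Y q f = g := by
  classical
  let f (A : Finset V) : F :=
    if hA : Aᶜ ∈ Y ∧ #Aᶜ = q then complSign F A * g (faceBasis F Y q ⟨Aᶜ, hA⟩) else 0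
  refine ⟨Finsupp.equivFunOnFinite.symm f, mem_chains_iff.2 fun A hA => ?_,
    scochain_ext fun σ => ?_⟩
  · refine dif_neg fun hAY => hA ⟨Set.mem_univ A, ?_⟩
    have := card_add_card_compl A
    omega
  · have hσ : σ.1ᶜᶜ ∈ Y ∧ #σ.1ᶜᶜ = q := by simpa only [compl_compl] using σ.2
    have hface : (⟨σ.1ᶜᶜ, hσ⟩ : Face Y q) = σ := Subtype.ext (compl_compl σ.1)
    rw [complCochain_faceBasis, Finsupp.equivFunOnFinite_symm_apply_apply]
    simp only [f, dif_pos hσ, hface]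
    rw [← mul_assoc, complSign_mul_self, one_mul]

theorem complCochain_eq_zero_iff {X : Set (Finset V)} {m q : ℕ} (hmq : m + q = Fintype.card V)
    {f : Finset V →₀ F} (hf : f ∈ chains F Set.univ m) :
    complCochain F (alexDual X) q f = 0 ↔ f ∈ chains F X m := by
  have hsign (A : Finset V) : complSign F A ≠ 0 :=
    left_ne_zero_of_mul_eq_one (complSign_mul_self F A)
  rw [mem_chains_iff_of_mem_chains_univ hf]
  constructor
  · intro h A hAX hA
    have hAc : Aᶜ ∈ alexDual X ∧ #Aᶜ = q :=
      ⟨by rwa [alexDual, Set.mem_ofPred_eq, compl_compl], by rw [card_compl]; omega⟩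
    have hface := complCochain_faceBasis f ⟨Aᶜ, hAc⟩
    rw [h, compl_compl] at hface
    exact (mul_eq_zero.1 hface.symm).resolve_left (hsign A)
  · intro h
    refine scochain_ext fun σ => ?_
    have hσ : #σ.1ᶜ = m := by rw [card_compl, σ.2.2]; omega
    rw [complCochain_faceBasis, h _ σ.2.1 hσ, mul_zero]
    rfl

theorem mem_scobound_iff {Y : Set (Finset V)} (hY : IsComplex Y) {m q : ℕ}
    (hmq : m + q = Fintype.card V + 1) {g : SCochain F Y q} :
    g ∈ scobound F Y q ↔
      ∃ h ∈ chains F Set.univ m, complCochain F Y q (boundary F h) = g := by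
  cases q with
  | zero =>
    have hm : Fintype.card V < m := by omega
    simp only [chains_eq_bot_of_card_lt Set.univ hm, Submodule.mem_bot, exists_eq_left, map_zero]
    exact eq_comm
  | succ q =>
    simp only [← scobdry_complCochain hY]
    constructor
    · rintro ⟨g', rfl⟩
      obtain ⟨h, hh, rfl⟩ := exists_complCochain_eq (m := m) (by omega) g'
      exact ⟨h, hh, rfl⟩
    · rintro ⟨h, -, rfl⟩
      exact ⟨_, rfl⟩

end SimplicialCochains

section Duality

/-- The quotient by the preimage of `B` is the quotient by `B` of the range of `φ`. -/
noncomputable def quotientComapEquiv {R M N : Type*} [Ring R] [AddCommGroup M] [AddCommGroup N]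
    [Module R M] [Module R N] (φ : M →ₗ[R] N) (B : Submodule R N) :
    (M ⧸ B.comap φ) ≃ₗ[R] LinearMap.range φ ⧸ B.comap (LinearMap.range φ).subtype :=
  have hker : LinearMap.ker ((B.comap (LinearMap.range φ).subtype).mkQ ∘ₗ φ.rangeRestrict) =
      B.comap φ := by
    rw [LinearMap.ker_comp, Submodule.ker_mkQ, ← Submodule.comap_comp,
      LinearMap.subtype_comp_codRestrict]
  Submodule.quotEquivOfEq _ _ hker.symm ≪≫ₗ
    LinearMap.quotKerEquivOfSurjective _
      ((Submodule.mkQ_surjective _).comp φ.surjective_rangeRestrict)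

/-- Two subquotients presented as quotients of the same module by the same submodule. -/
noncomputable def subquotientEquiv {R M N P : Type*} [Ring R] [AddCommGroup M] [AddCommGroup N]
    [AddCommGroup P] [Module R M] [Module R N] [Module R P] {φ : M →ₗ[R] N} {ψ : M →ₗ[R] P}
    {K B : Submodule R N} {L C : Submodule R P} (hK : LinearMap.range φ = K)
    (hL : LinearMap.range ψ = L) (hBC : B.comap φ = C.comap ψ) :
    (K ⧸ B.comap K.subtype) ≃ₗ[R] L ⧸ C.comap L.subtype := by
  subst hK hL
  exact (quotientComapEquiv φ B).symm ≪≫ₗ Submodule.quotEquivOfEq _ _ hBC ≪≫ₗ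
    quotientComapEquiv ψ C

variable [LinearOrder V] (F : Type) [Field F]

/-- The cycles relative to `X`: the chains of the full simplex on faces of cardinality `k + 1` whose
boundary is supported on `X`. -/
noncomputable def relCycles (X : Set (Finset V)) (k : ℕ) : Submodule F (Finset V →₀ F) :=
  chains F Set.univ (k + 1) ⊓ (chains F X k).comap (boundary F)

/-- The connecting map of the pair formed by the full simplex and `X`, on cycles. -/
noncomputable def relBoundary (X : Set (Finset V)) (k : ℕ) : relCycles F X k →ₗ[F] SChain F X k :=
  (chainEquiv F X k).symm.toLinearMap ∘ₗ
    (boundary F).restrict fun _ (hf : _ ∈ relCycles F X k) => hf.2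

variable {F} {X : Set (Finset V)}

theorem chainEquiv_relBoundary {k : ℕ} (f : relCycles F X k) :
    (chainEquiv F X k (relBoundary F X k f) : Finset V →₀ F) = boundary F f := by
  rw [relBoundary, LinearMap.comp_apply, LinearEquiv.coe_coe, LinearEquiv.apply_symm_apply,
    LinearMap.coe_restrict_apply]

theorem range_relBoundary [Nonempty V] (hX : IsComplex X) (k : ℕ) :
    LinearMap.range (relBoundary F X k) = scyc F X k := by
  ext c
  rw [mem_scyc_iff hX]
  constructor
  · rintro ⟨f, rfl⟩
    rw [chainEquiv_relBoundary, boundary_boundary]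
  · intro hc
    have hcX := (chainEquiv F X k c).2
    obtain ⟨w, hw, hwc⟩ :=
      exists_boundary_eq_of_boundary_eq_zero (chains_mono (Set.subset_univ X) k hcX) hc
    have hwX : w ∈ relCycles F X k := ⟨hw, Submodule.mem_comap.2 (hwc ▸ hcX)⟩
    refine ⟨⟨w, hwX⟩, (chainEquiv F X k).injective (Subtype.ext ?_)⟩
    rw [chainEquiv_relBoundary, hwc]

variable [Fintype V]

variable (F X) in
/-- The cochain on the dual of `X` given by a relative cycle of the pair formed by the full simplex
and `X`. -/
noncomputable def relCochain (k q : ℕ) : relCycles F X k →ₗ[F] SCochain F (alexDual X) q :=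
  complCochain F (alexDual X) q ∘ₗ (relCycles F X k).subtype

theorem isComplex_alexDual (hX : IsComplex X) : IsComplex (alexDual X) :=
  fun _ hA _ hBA hB => hA (hX _ hB _ (compl_subset_compl.2 hBA))

theorem range_relCochain (hX : IsComplex X) {k q : ℕ}
    (hkq : k + 1 + q = Fintype.card V) :
    LinearMap.range (relCochain F X k q) = LinearMap.ker (scobdry F (alexDual X) q) := by
  have hcocycle {f : Finset V →₀ F} (hf : f ∈ chains F Set.univ (k + 1)) :
      complCochain F (alexDual X) q f ∈ LinearMap.ker (scobdry F (alexDual X) q) ↔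
        boundary F f ∈ chains F X k := by
    rw [LinearMap.mem_ker, scobdry_complCochain (isComplex_alexDual hX),
      complCochain_eq_zero_iff (by omega) (boundary_mem_chains_univ hf)]
  ext g
  constructor
  · rintro ⟨f, rfl⟩
    exact (hcocycle f.2.1).2 f.2.2
  · intro hg
    obtain ⟨f, hf, rfl⟩ := exists_complCochain_eq hkq g
    exact ⟨⟨f, hf, (hcocycle hf).1 hg⟩, rfl⟩

theorem comap_relBoundary_eq_comap_relCochain [Nonempty V] (hX : IsComplex X) {k q : ℕ}
    (hkq : k + 1 + q = Fintype.card V) :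
    (LinearMap.range (sbdry F X k)).comap (relBoundary F X k) =
      (scobound F (alexDual X) q).comap (relCochain F X k q) := by
  ext ⟨f, hf, hfX⟩
  rw [Submodule.mem_comap, Submodule.mem_comap, mem_range_sbdry_iff hX, chainEquiv_relBoundary,
    mem_scobound_iff (isComplex_alexDual hX) (m := k + 2) (by omega)]
  have hdiff {h : Finset V →₀ F} (hh : h ∈ chains F Set.univ (k + 2)) :
      complCochain F (alexDual X) q (boundary F h) = complCochain F (alexDual X) q f ↔
        f - boundary F h ∈ chains F X (k + 1) := by
    rw [eq_comm, ← sub_eq_zero, ← map_sub, complCochain_eq_zero_iff hkq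
      (Submodule.sub_mem _ hf (boundary_mem_chains_univ hh))]
  constructor
  · rintro ⟨s, hs, hsf⟩
    obtain ⟨h, hh, hhf⟩ := exists_boundary_eq_of_boundary_eq_zero
      (Submodule.sub_mem _ hf (chains_mono (Set.subset_univ X) _ hs))
      (by rw [map_sub, hsf, sub_self])
    exact ⟨h, hh, (hdiff hh).2 (by rwa [hhf, sub_sub_cancel])⟩
  · rintro ⟨h, hh, hhf⟩
    exact ⟨f - boundary F h, (hdiff hh).1 hhf, by rw [map_sub, boundary_boundary, sub_zero]⟩

/-- The Alexander duality isomorphism: both sides are the relative cycles modulo the same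
submodule. -/
noncomputable def dualityEquiv [Nonempty V] (hX : IsComplex X) {k q : ℕ}
    (hkq : k + 1 + q = Fintype.card V) : RH F X k ≃ₗ[F] RCoh F (alexDual X) q :=
  subquotientEquiv (M := relCycles F X k) (range_relBoundary hX k) (range_relCochain hX hkq)
    (comap_relBoundary_eq_comap_relCochain hX hkq)

end Duality

end AlexanderDuality

/-- **Combinatorial Alexander Duality** (Theorem 3.2).
Let `X` be a simplicial complex on a finite vertex set `V` with `|V| = n`.  Then for all
`0 ≤ q ≤ n-1` there is an isomorphism `h̃_{n-2-q}(X; F) ≅ h̃^{q-1}(X^∨; F)`.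
(Recall `RH F X k` is `h̃_{k-1}(X;F)` and `RCoh F X k` is `h̃^{k-1}(X;F)`, so the degrees
below are `(n-2-q)` and `(q-1)` respectively.) -/
theorem combinatorial_alexander_duality
    {V : Type} [Fintype V] [LinearOrder V] (F : Type) [Field F]
    (X : Set (Finset V)) (hX : IsComplex X)
    (n : ℕ) (hn : Fintype.card V = n)
    (q : ℕ) (hq : (q : ℤ) ≤ (n : ℤ) - 1) :
    Nonempty (RH F X (n - 1 - q) ≃ₗ[F] RCoh F (alexDual X) q) := by
  have : Nonempty V := Fintype.card_pos_iff.1 (by omega)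
  exact ⟨AlexanderDuality.dualityEquiv hX (by omega)⟩
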